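/- Let T = (T_1, …, T_n) be a Beurling tuple on a complex Hilbert space H, let j ∈ {1, …, n}, let P ⊆ {1, …, n} \ {j}, and let P′ = {1, …, n} \ (P ∪ {j}) = {q_1 < ⋯ < q_s}. Then for every h ∈ H, the family (T_{P′}^α D²_{j,T} T_{P′}^{*α} h)_{α ∈ ℤ_+^s} is summable in H with sum D²_{j,T,P} h; i.e., D²_{j,T,P} = Σ_{α ∈ ℤ_+^s} T_{P′}^α D²_{j,T} T_{P′}^{*α} in the strong operator topology. -/

import Mathlib

/-!
The maps `A ↦ A - T k A (T k)*` commute, so with `Q = {1,…,n} \ (P ∪ {j})` the joint defect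
operator `D²_{j,T}` is obtained from `D²_{j,T,P}` by applying these maps for all `k ∈ Q`. Since
every `T k` is of class `C_{·0}`, each map is inverted by its Neumann series, first for quadratic
forms (`hasSum_reApplyInnerSelf_finPow`). If `D²_{j,T}` is positive, the sums have nonnegative
terms, so the iterated series may be summed over multi-indices, and positivity also upgrades the
convergence of forms to strong convergence (`hasSum_apply_of_hasSum_reApplyInnerSelf`).

The remaining point is the positivity of `D²_{j,T}` (`isPositive_jointDefectSq`). The same series
expansion, applied to `A = I` and `𝕊ₙ⁻¹(T, T*) = C* C`, shows that `W h = (C T*^α h)_α` is an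
isometry of `H` into `ℓ²(ℕⁿ; H)` which intertwines each `(T i)*` with the adjoint of the coordinate
shift `V i`. Let `p = 1 - W W*`, whose range is invariant under the shifts, `R i = (V i) p` and
`X i = p (V i) W`. Then `I - (T i)* (T i) = (X i)* (X i)`, and
`(X j) (T i)* = (R i)* (X j)` for `i ≠ j`; hence `D²_{j,T}` equals `(X j)* Z (X j)` with
`Z = ∏_{i ≠ j} (I - Δ_{R i}) p`. The Beurling condition says exactly that `(X i) (X k)* = 0` for
`i ≠ k`, and this operator is the obstruction to the isometries `R i` of the range of `p` being
doubly commuting. So the projections `(R i) (R i)*` commute with one another, `Z` is the projection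
`p ∏_{i ≠ j} (1 - (R i) (R i)*)`, and `D²_{j,T}` is positive
(`isPositive_applyDelta_of_dilation`).
-/

open ContinuousLinearMap Filter Topology

variable {H : Type*} [NormedAddCommGroup H] [InnerProductSpace ℂ H] [CompleteSpace H]

/-- `T^k = T 0 ^ k 0 * T 1 ^ k 1 * ⋯` in increasing index order. -/
noncomputable def finPow {n : ℕ} (T : Fin n → H →L[ℂ] H) (k : Fin n → ℕ) : H →L[ℂ] H :=
  ((List.finRange n).map fun i => T i ^ k i).prod

/-- `𝕊ₙ⁻¹(T, T*) = ∑_{k ∈ {0,1}ⁿ} (−1)^{|k|} T^k T^{*k}`. -/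
noncomputable def szegoInv {n : ℕ} (T : Fin n → H →L[ℂ] H) : H →L[ℂ] H :=
  ∑ k : Fin n → Bool,
    ((-1 : ℂ) ^ (∑ i, if k i then 1 else 0)) •
      (finPow T (fun i => if k i then 1 else 0) *
        adjoint (finPow T (fun i => if k i then 1 else 0)))

/-- A Szegő tuple: commuting contractions, `𝕊ₙ⁻¹(T,T*) ≥ 0`, each `Tᵢ` of class `C_{·0}`. -/
structure IsSzegoTuple {n : ℕ} (T : Fin n → H →L[ℂ] H) : Prop where
  comm : ∀ i j, T i * T j = T j * T i
  contraction : ∀ i, ‖T i‖ ≤ 1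
  pos : (szegoInv T).IsPositive
  pure : ∀ i (h : H), Tendsto (fun m : ℕ => (adjoint (T i) ^ m) h) atTop (𝓝 0)

/-- A Beurling tuple: a Szegő tuple with `(I − Tᵢ*Tᵢ)(I − Tⱼ*Tⱼ) = 0` for `i ≠ j`. -/
def IsBeurlingTuple {n : ℕ} (T : Fin n → H →L[ℂ] H) : Prop :=
  IsSzegoTuple T ∧
    ∀ i j, i ≠ j → (1 - adjoint (T i) * T i) * (1 - adjoint (T j) * T j) = 0

/-- Apply `∏_{k ∈ L} (I − Δ_{T k})` to `A`, where `Δ_X(A) = X A X*`. -/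
noncomputable def applyDelta {n : ℕ} (T : Fin n → H →L[ℂ] H) (L : List (Fin n))
    (A : H →L[ℂ] H) : H →L[ℂ] H :=
  L.foldr (fun k B => B - T k * B * adjoint (T k)) A

/-- The truncated defect operator `D²_{j,T,P} = (∏_{k ∈ P} (I − Δ_{T k}))(I − Tⱼ*Tⱼ)`. -/
noncomputable def truncDefectSq {n : ℕ} (T : Fin n → H →L[ℂ] H) (j : Fin n)
    (P : Finset (Fin n)) : H →L[ℂ] H :=
  applyDelta T (P.sort (· ≤ ·)) (1 - adjoint (T j) * T j)

/-- `D²_{j,T} = D²_{j,T,P}` for `P = {1,…,n} \ {j}`. -/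
noncomputable def jointDefectSq {n : ℕ} (T : Fin n → H →L[ℂ] H) (j : Fin n) : H →L[ℂ] H :=
  truncDefectSq T j (Finset.univ.erase j)

/-- The `(i,j)`-th joint commutator `δᵢⱼ(T) = (∏_{k ∉ {i,j}} (I − Δ_{T k}))([Tⱼ, Tᵢ*])`. -/
noncomputable def jointComm {n : ℕ} (T : Fin n → H →L[ℂ] H) (i j : Fin n) : H →L[ℂ] H :=
  applyDelta T (((Finset.univ.erase i).erase j).sort (· ≤ ·))
    (T j * adjoint (T i) - adjoint (T i) * T j)

/-- Extend a multi-index supported on `P` by zero: gives `T_P^α` via `finPow`. -/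
def extendSupport {n : ℕ} (P : Finset (Fin n)) (α : ↥P → ℕ) : Fin n → ℕ :=
  fun i => if h : i ∈ P then α ⟨i, h⟩ else 0


set_option linter.unusedSectionVars false

/-! ### The maps `I - Δ` and positivity -/

lemma op_mul_apply (A B : H →L[ℂ] H) (x : H) : (A * B) x = A (B x) := rfl

lemma applyDelta_cons {n : ℕ} (T : Fin n → H →L[ℂ] H) (k : Fin n) (L : List (Fin n))
    (A : H →L[ℂ] H) : applyDelta T (k :: L) A =
      applyDelta T L A - T k * applyDelta T L A * adjoint (T k) := rfl

lemma applyDelta_append {n : ℕ} (T : Fin n → H →L[ℂ] H) (L M : List (Fin n))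
    (A : H →L[ℂ] H) : applyDelta T (L ++ M) A = applyDelta T L (applyDelta T M A) := by
  simp [applyDelta]

lemma applyDelta_perm {n : ℕ} {T : Fin n → H →L[ℂ] H} (hc : ∀ i j, T i * T j = T j * T i)
    {L M : List (Fin n)} (h : L.Perm M) (A : H →L[ℂ] H) :
    applyDelta T L A = applyDelta T M A := by
  refine h.foldr_eq' (fun x _ y _ B => ?_) A
  have h1 : adjoint (T x) * adjoint (T y) = adjoint (T y) * adjoint (T x) := by
    simp only [← star_eq_adjoint, ← star_mul, hc y x]
  have h2 : T y * (T x * B * adjoint (T x)) * adjoint (T y)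
      = T x * (T y * B * adjoint (T y)) * adjoint (T x) := by
    calc _ = (T y * T x) * B * (adjoint (T x) * adjoint (T y)) := by noncomm_ring
      _ = _ := by rw [hc y x, h1]; noncomm_ring
  simp only [mul_sub, sub_mul, h2]
  abel

lemma isSelfAdjoint_applyDelta {n : ℕ} (T : Fin n → H →L[ℂ] H) (L : List (Fin n))
    {A : H →L[ℂ] H} (hA : IsSelfAdjoint A) : IsSelfAdjoint (applyDelta T L A) := by
  induction L with
  | nil => exact hA
  | cons k L ih => exact ih.sub (ih.conjugate (T k))

/-- The quadratic forms of `A - X A X*` along the orbit `X*^m h` telescope. -/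
lemma reApplyInnerSelf_step (X A : H →L[ℂ] H) (h : H) (m : ℕ) :
    (A - X * A * adjoint X).reApplyInnerSelf ((adjoint X ^ m) h) =
      A.reApplyInnerSelf ((adjoint X ^ m) h) - A.reApplyInnerSelf ((adjoint X ^ (m + 1)) h) := by
  simp only [reApplyInnerSelf_apply, pow_succ', sub_apply, op_mul_apply, inner_sub_left, map_sub]
  rw [← adjoint_inner_right X]

lemma tendsto_reApplyInnerSelf (A : H →L[ℂ] H) {f : ℕ → H} (hf : Tendsto f atTop (𝓝 0)) :
    Tendsto (fun m => A.reApplyInnerSelf (f m)) atTop (𝓝 0) := by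
  have := (A.reApplyInnerSelf_continuous.tendsto 0).comp hf
  rwa [reApplyInnerSelf_apply, map_zero, inner_zero_left, map_zero] at this

/-- For `X` of class `C_{·0}`, the form of `A` is the sum of the forms of
`X^m (A - X A X*) X*^m`. -/
lemma hasSum_reApplyInnerSelf_pow {X A : H →L[ℂ] H}
    (hX : ∀ h : H, Tendsto (fun m : ℕ => (adjoint X ^ m) h) atTop (𝓝 0))
    (hd : (A - X * A * adjoint X).IsPositive) (h : H) :
    HasSum (fun m : ℕ => (A - X * A * adjoint X).reApplyInnerSelf ((adjoint X ^ m) h))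
      (A.reApplyInnerSelf h) := by
  rw [hasSum_iff_tendsto_nat_of_nonneg (fun m => (isPositive_def.1 hd).2 _)]
  simp only [reApplyInnerSelf_step]
  simp only [Finset.sum_range_sub']
  simpa using (tendsto_reApplyInnerSelf A (hX h)).const_sub (A.reApplyInnerSelf h)

/-- The Neumann series writes the form of `A` as a sum of nonnegative terms. -/
lemma isPositive_of_delta {X A : H →L[ℂ] H}
    (hX : ∀ h : H, Tendsto (fun m : ℕ => (adjoint X ^ m) h) atTop (𝓝 0))
    (hA : IsSelfAdjoint A) (hd : (A - X * A * adjoint X).IsPositive) : A.IsPositive :=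
  isPositive_def'.2 ⟨hA, fun h =>
    (hasSum_reApplyInnerSelf_pow hX hd h).nonneg fun _ => (isPositive_def.1 hd).2 _⟩

lemma isPositive_of_applyDelta {n : ℕ} {T : Fin n → H →L[ℂ] H}
    (hX : ∀ i (h : H), Tendsto (fun m : ℕ => (adjoint (T i) ^ m) h) atTop (𝓝 0))
    {A : H →L[ℂ] H} (hA : IsSelfAdjoint A) (L : List (Fin n))
    (hd : (applyDelta T L A).IsPositive) : A.IsPositive := by
  induction L with
  | nil => exact hd
  | cons k L ih => exact ih (isPositive_of_delta (hX k) (isSelfAdjoint_applyDelta T L hA) hd)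

/-! ### Multi-index powers -/

lemma finPow_add {n : ℕ} {T : Fin n → H →L[ℂ] H} (hc : ∀ i j, T i * T j = T j * T i)
    (a b : Fin n → ℕ) : finPow T (a + b) = finPow T a * finPow T b := by
  unfold finPow
  induction List.finRange n with
  | nil => simp
  | cons i L ih =>
    have hcomm : Commute (T i ^ b i) (L.map fun i => T i ^ a i).prod := by
      refine Commute.list_prod_right _ _ fun x hx => ?_
      obtain ⟨l, -, rfl⟩ := List.mem_map.1 hx
      exact Commute.pow_pow (hc i l) _ _
    rw [List.map_cons, List.prod_cons, ih, Pi.add_apply, pow_add]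
    simp only [List.map_cons, List.prod_cons, mul_assoc]
    rw [← mul_assoc (T i ^ b i) (List.map _ _).prod, hcomm.eq, mul_assoc]

lemma finPow_single {n : ℕ} (T : Fin n → H →L[ℂ] H) (k : Fin n) (m : ℕ) :
    finPow T (Pi.single k m) = T k ^ m := by
  unfold finPow
  rw [List.prod_map_eq_pow_single k]
  · simp [List.count_eq_one_of_mem (List.nodup_finRange n) (List.mem_finRange k)]
  · intro i hi _
    simp [Pi.single_eq_of_ne hi]

lemma finPow_zero {n : ℕ} (T : Fin n → H →L[ℂ] H) : finPow T 0 = 1 := by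
  simp [finPow]

/-- A multi-index on `insert k Q` is a pair of an exponent for `k` and a multi-index on `Q`. -/
def insertIndexEquiv {n : ℕ} {k : Fin n} {Q : Finset (Fin n)} (hk : k ∉ Q) :
    ℕ × (↥Q → ℕ) ≃ (↥(insert k Q) → ℕ) where
  toFun x i := if h : (i : Fin n) ∈ Q then x.2 ⟨i, h⟩ else x.1
  invFun β := (β ⟨k, Finset.mem_insert_self k Q⟩, fun i => β ⟨i, Finset.mem_insert_of_mem i.2⟩)
  left_inv x := by
    ext i
    · simp [hk]
    · simp
  right_inv β := by
    ext ⟨i, hi⟩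
    by_cases h : i ∈ Q
    · simp [h]
    · obtain rfl : i = k := by simpa [h] using hi
      simp [h]

lemma extendSupport_insert {n : ℕ} {k : Fin n} {Q : Finset (Fin n)} (hk : k ∉ Q)
    (x : ℕ × (↥Q → ℕ)) : extendSupport (insert k Q) (insertIndexEquiv hk x) =
      Pi.single k x.1 + extendSupport Q x.2 := by
  ext i
  by_cases hi : i = k
  · subst hi
    simp [extendSupport, insertIndexEquiv, hk]
  · by_cases h : i ∈ Q <;> simp [extendSupport, insertIndexEquiv, hi, h]

/-! ### Series expansions -/

/-- If `(∏_{k ∈ Q} (I - Δ_{T k})) A ≥ 0`, inverting the operators `I - Δ_{T k}` by Neumann series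
expands `A`, at the level of quadratic forms. -/
lemma hasSum_reApplyInnerSelf_finPow {n : ℕ} {T : Fin n → H →L[ℂ] H}
    (hc : ∀ i j, T i * T j = T j * T i)
    (hX : ∀ i (h : H), Tendsto (fun m : ℕ => (adjoint (T i) ^ m) h) atTop (𝓝 0))
    (Q : Finset (Fin n)) : ∀ {A : H →L[ℂ] H}, IsSelfAdjoint A →
      (applyDelta T (Q.sort (· ≤ ·)) A).IsPositive → ∀ h : H,
      HasSum (fun α : ↥Q → ℕ => (applyDelta T (Q.sort (· ≤ ·)) A).reApplyInnerSelf
        (adjoint (finPow T (extendSupport Q α)) h)) (A.reApplyInnerSelf h) := by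
  induction Q using Finset.induction_on with
  | empty =>
    intro A _ _ h
    have : ∀ α, extendSupport (∅ : Finset (Fin n)) α = 0 := fun α => by
      ext i; simp [extendSupport]
    simp only [this, finPow_zero]
    have h1 : adjoint (1 : H →L[ℂ] H) = 1 := by rw [← star_eq_adjoint, star_one]
    simp [applyDelta, h1]
  | insert k Q hk ih =>
    intro A hA hpos h
    set B : H →L[ℂ] H := A - T k * A * adjoint (T k) with hB
    have hperm : ((insert k Q).sort (· ≤ ·)).Perm (Q.sort (· ≤ ·) ++ [k]) := by
      rw [List.perm_ext_iff_of_nodup (Finset.sort_nodup _ _)]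
      · intro a; simp [or_comm]
      · simp [List.nodup_append, Finset.sort_nodup]
        exact hk
    have hBA : applyDelta T ((insert k Q).sort (· ≤ ·)) A = applyDelta T (Q.sort (· ≤ ·)) B := by
      rw [applyDelta_perm hc hperm, applyDelta_append]
      rfl
    rw [hBA] at hpos ⊢
    have hBs : IsSelfAdjoint B := isSelfAdjoint_applyDelta T [k] hA
    have hBp : B.IsPositive := isPositive_of_applyDelta hX hBs _ hpos
    rw [← (insertIndexEquiv hk).hasSum_iff]
    have hfun : ((fun α : ↥(insert k Q) → ℕ => (applyDelta T (Q.sort (· ≤ ·)) B).reApplyInnerSelf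
        (adjoint (finPow T (extendSupport (insert k Q) α)) h)) ∘ insertIndexEquiv hk) =
        fun x => (applyDelta T (Q.sort (· ≤ ·)) B).reApplyInnerSelf
          (adjoint (finPow T (extendSupport Q x.2)) ((adjoint (T k) ^ x.1) h)) := by
      funext x
      have h1 : adjoint (finPow T (Pi.single k x.1 + extendSupport Q x.2)) =
          adjoint (finPow T (extendSupport Q x.2)) * adjoint (T k) ^ x.1 := by
        rw [finPow_add hc, finPow_single]
        simp only [← star_eq_adjoint, star_mul, star_pow]
      simp only [Function.comp_apply, extendSupport_insert, h1, op_mul_apply]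
    rw [hfun]
    have hin := fun m : ℕ => ih hBs hpos ((adjoint (T k) ^ m) h)
    have hout := hasSum_reApplyInnerSelf_pow (hX k) hBp h
    have hsum : Summable fun x : ℕ × (↥Q → ℕ) =>
        (applyDelta T (Q.sort (· ≤ ·)) B).reApplyInnerSelf
          (adjoint (finPow T (extendSupport Q x.2)) ((adjoint (T k) ^ x.1) h)) := by
      rw [summable_prod_of_nonneg fun x => (isPositive_def.1 hpos).2 _]
      refine ⟨fun m => (hin m).summable, ?_⟩
      simp only [(hin _).tsum_eq]
      exact hout.summable
    convert hsum.hasSum using 1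
    rw [hsum.tsum_prod' fun m => (hin m).summable]
    simp only [(hin _).tsum_eq]
    exact hout.tsum_eq.symm

/-- For positive operators, convergence of a series of quadratic forms upgrades to strong
convergence: the remainders `G` are positive with `‖G‖ ≤ ‖A‖`, so that
`‖G h‖² ≤ ‖A‖ ⟪G h, h⟫`. -/
lemma hasSum_apply_of_hasSum_reApplyInnerSelf {ι : Type*} {F : ι → H →L[ℂ] H} {A : H →L[ℂ] H}
    (hF : ∀ i, (F i).IsPositive) (hA : A.IsPositive)
    (hs : ∀ h, HasSum (fun i => (F i).reApplyInnerSelf h) (A.reApplyInnerSelf h)) (h : H) :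
    HasSum (fun i => F i h) (A h) := by
  have hq : ∀ (s : Finset ι) (x : H), (A - ∑ i ∈ s, F i).reApplyInnerSelf x =
      A.reApplyInnerSelf x - ∑ i ∈ s, (F i).reApplyInnerSelf x := fun s x => by
    simp [reApplyInnerSelf_apply, inner_sub_left, sum_inner, sum_apply]
  have hSp : ∀ s : Finset ι, (∑ i ∈ s, F i).IsPositive := fun s => isPositive_sum s fun i _ => hF i
  have hG : ∀ s : Finset ι, (A - ∑ i ∈ s, F i).IsPositive := fun s => by
    refine isPositive_def'.2 ⟨hA.isSelfAdjoint.sub (hSp s).isSelfAdjoint, fun x => ?_⟩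
    -- Partial sums of a series of nonnegative forms lie below its sum.
    rw [hq, sub_nonneg]
    exact sum_le_hasSum s (fun i _ => (isPositive_def.1 (hF i)).2 x) (hs x)
  have hb : ∀ s : Finset ι, ‖(A - ∑ i ∈ s, F i) h‖ ^ 2 ≤
      ‖A‖ * (A.reApplyInnerSelf h - ∑ i ∈ s, (F i).reApplyInnerSelf h) := fun s => by
    rw [← hq]
    set G := A - ∑ i ∈ s, F i with hGdef
    have hGn : (0 : H →L[ℂ] H) ≤ G := (nonneg_iff_isPositive _).2 (hG s)
    have hGA : G ≤ A := by
      rw [ContinuousLinearMap.le_def, hGdef]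
      simpa using hSp s
    have hn : ‖G‖ ≤ ‖A‖ := CStarAlgebra.norm_le_norm_of_nonneg_of_le hGn hGA
    obtain ⟨C, hC⟩ := CStarAlgebra.nonneg_iff_eq_star_mul_self.1 hGn
    have hCn : ‖G‖ = ‖C‖ * ‖C‖ := by rw [hC, CStarRing.norm_star_mul_self]
    have hGC : G.reApplyInnerSelf h = ‖C h‖ ^ 2 := by
      rw [reApplyInnerSelf_apply, hC, op_mul_apply, star_eq_adjoint, adjoint_inner_left,
        inner_self_eq_norm_sq]
    have h1 : ‖G h‖ ≤ ‖C‖ * ‖C h‖ := by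
      rw [hC, op_mul_apply]
      exact (le_opNorm _ _).trans_eq (by rw [norm_star])
    calc ‖G h‖ ^ 2 ≤ (‖C‖ * ‖C h‖) ^ 2 := by gcongr
      _ = ‖G‖ * ‖C h‖ ^ 2 := by rw [hCn]; ring
      _ ≤ ‖A‖ * G.reApplyInnerSelf h := by rw [hGC]; gcongr
  have ht : Tendsto (fun s : Finset ι =>
      ‖A‖ * (A.reApplyInnerSelf h - ∑ i ∈ s, (F i).reApplyInnerSelf h)) atTop (𝓝 0) := by
    simpa using ((hs h).const_sub (A.reApplyInnerSelf h)).const_mul ‖A‖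
  have h2 := squeeze_zero (fun s => by positivity) hb ht
  have h3 : Tendsto (fun s : Finset ι => ‖(A - ∑ i ∈ s, F i) h‖) atTop (𝓝 0) := by
    simpa [Real.sqrt_sq] using h2.sqrt
  rw [HasSum, tendsto_iff_norm_sub_tendsto_zero]
  simpa [sum_apply, norm_sub_rev] using h3

/-! ### Positivity of defect operators from an isometric dilation -/

section Dilation

variable {K : Type*} [NormedAddCommGroup K] [InnerProductSpace ℂ K] [CompleteSpace K]

/-- For doubly commuting isometries `R i` of the range of a projection `p` (extended by zero),
`∏ (I - Δ_{R i})` maps `p` to the projection `p ∏ (1 - R i (R i)*)`. -/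
lemma applyDelta_isStarProjection {n : ℕ} {R : Fin n → K →L[ℂ] K} {p : K →L[ℂ] K}
    (hp : IsStarProjection p) (hRp : ∀ i, R i * p = R i) (hpR : ∀ i, p * R i = R i)
    (hiso : ∀ i, star (R i) * R i = p) (hcomm : ∀ i k, R i * R k = R k * R i)
    (hdc : ∀ i k, i ≠ k → star (R i) * R k = R k * star (R i))
    (L : List (Fin n)) (hL : L.Nodup) :
    IsStarProjection (applyDelta R L p) ∧ ∀ i ∉ L, R i * applyDelta R L p =
      applyDelta R L p * R i := by
  induction L with
  | nil => exact ⟨hp, fun i _ => by simp [applyDelta, hRp, hpR]⟩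
  | cons k L ih =>
    obtain ⟨hkL, hL⟩ := List.nodup_cons.1 hL
    obtain ⟨hZ, hZR⟩ := ih hL
    rw [applyDelta_cons, ← star_eq_adjoint]
    set Z := applyDelta R L p
    have hZi : Z * Z = Z := hZ.isIdempotentElem
    have hZs : star Z = Z := hZ.isSelfAdjoint
    have hZk := hZR k hkL
    have hZk' : star (R k) * Z = Z * star (R k) := by
      simpa [hZs] using (congrArg star hZk).symm
    have hRRR : R k * star (R k) * R k = R k := by rw [mul_assoc, hiso, hRp]
    have hs : R k * Z * star (R k) = Z * (R k * star (R k)) := by rw [hZk, mul_assoc]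
    have hs' : (R k * star (R k)) * Z = Z * (R k * star (R k)) := by
      rw [mul_assoc, hZk', ← mul_assoc, hZk, mul_assoc]
    have hee : (R k * star (R k)) * (R k * star (R k)) = R k * star (R k) := by
      rw [← mul_assoc, hRRR]
    refine ⟨⟨?_, isSelfAdjoint_applyDelta R [k] hZ.isSelfAdjoint⟩, fun i hi => ?_⟩
    · rw [hs]
      set e := R k * star (R k)
      have h1 : Z * e * Z = Z * e := by rw [mul_assoc, hs', ← mul_assoc, hZi]
      have h2 : Z * e * (Z * e) = Z * e := by rw [← mul_assoc, h1, mul_assoc, hee]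
      have h3 : Z * (Z * e) = Z * e := by rw [← mul_assoc, hZi]
      rw [IsIdempotentElem, mul_sub, sub_mul, sub_mul, hZi, h1, h2, h3, sub_self, sub_zero]
    · have hik : i ≠ k := fun h => hi (h ▸ List.mem_cons_self)
      have hiZ := hZR i fun h => hi (List.mem_cons_of_mem _ h)
      rw [mul_sub, sub_mul, hiZ, hs]
      congr 1
      calc R i * (Z * (R k * star (R k))) = (R i * Z) * R k * star (R k) := by noncomm_ring
        _ = Z * (R i * R k) * star (R k) := by rw [hiZ]; noncomm_ring
        _ = Z * R k * (R i * star (R k)) := by rw [hcomm]; noncomm_ring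
        _ = Z * (R k * star (R k)) * R i := by rw [← hdc k i hik.symm]; noncomm_ring

lemma comp_eq_zero_of_adjoint_comp {E F G : Type*} [NormedAddCommGroup E] [InnerProductSpace ℂ E]
    [NormedAddCommGroup F] [InnerProductSpace ℂ F] [CompleteSpace F]
    [NormedAddCommGroup G] [InnerProductSpace ℂ G] [CompleteSpace G]
    {A : F →L[ℂ] G} {B : E →L[ℂ] F} (h : ∀ x, adjoint A (A (B x)) = 0) (x : E) :
    A (B x) = 0 := by
  rw [← inner_self_eq_zero (𝕜 := ℂ), ← adjoint_inner_left, h, inner_zero_left]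

/-- If `T` dilates, through the isometry `W`, to doubly commuting isometries `V` with
`(V i)* W = W (T i)*`, and the operators `I - (T i)* (T i)` are mutually orthogonal, then the joint
defect operators of `T` are positive. With `p = 1 - W W*` and `X = p (V j) W`, the defect of `T j`
is `X* X`, and `X (T i)* = (R i)* X` for the restrictions `R i = (V i) p`, which the
orthogonality makes doubly commuting. -/
lemma isPositive_applyDelta_of_dilation {n : ℕ} {T : Fin n → H →L[ℂ] H} {V : Fin n → K →L[ℂ] K}
    {W : H →L[ℂ] K} (hW : ∀ x, adjoint W (W x) = x)
    (hVW : ∀ i x, adjoint (V i) (W x) = W (adjoint (T i) x))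
    (hiso : ∀ i y, adjoint (V i) (V i y) = y)
    (hcomm : ∀ i k y, V i (V k y) = V k (V i y))
    (hdc : ∀ i k, i ≠ k → ∀ y, adjoint (V i) (V k y) = V k (adjoint (V i) y))
    (horth : ∀ i k, i ≠ k → (1 - adjoint (T i) * T i) * (1 - adjoint (T k) * T k) = 0)
    (j : Fin n) (L : List (Fin n)) (hL : L.Nodup) (hj : j ∉ L) :
    (applyDelta T L (1 - adjoint (T j) * T j)).IsPositive := by
  have hWV : ∀ i y, adjoint W (V i y) = T i (adjoint W y) := fun i y => by
    refine ext_inner_right ℂ fun x => ?_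
    rw [adjoint_inner_left, ← adjoint_inner_right, hVW, ← adjoint_inner_left,
      adjoint_inner_right]
  set p : K →L[ℂ] K := 1 - W ∘L adjoint W with hpdef
  have hpa : ∀ y, p y = y - W (adjoint W y) := fun y => rfl
  have hp : IsStarProjection p := by
    constructor
    · refine ContinuousLinearMap.ext fun y => ?_
      simp [hpa, hW]
    · rw [IsSelfAdjoint, star_eq_adjoint, hpdef, map_sub, adjoint_comp, adjoint_adjoint,
        ← star_eq_adjoint, star_one]
  have hps : adjoint p = p := hp.isSelfAdjoint
  set X : Fin n → H →L[ℂ] K := fun i => p ∘L V i ∘L W with hX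
  have hXa : ∀ i x, X i x = p (V i (W x)) := fun i x => rfl
  have hXs : ∀ i y, adjoint (X i) y = adjoint W (adjoint (V i) (p y)) := fun i y => by
    simp only [hX, adjoint_comp, hps, comp_apply]
  have hD : ∀ i x, adjoint (X i) (X i x) = (1 - adjoint (T i) * T i) x := fun i x => by
    simp [hXs, hXa, hpa, hW, hVW, hWV, hiso]
  have hXX : ∀ i k, i ≠ k → ∀ y, X i (adjoint (X k) y) = 0 := by
    intro i k hik
    -- Cancelling the outer factors of `X i* X i X k* X k = 0` one at a time.
    have h1 : ∀ x, X i ((adjoint (X k) ∘L X k) x) = 0 :=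
      comp_eq_zero_of_adjoint_comp fun x => by
        rw [hD, comp_apply, hD, ← op_mul_apply, horth i k hik, zero_apply]
    have h2 : X i ∘L adjoint (X k) ∘L X k = 0 := ContinuousLinearMap.ext h1
    have h3 : adjoint (X k) ∘L X k ∘L adjoint (X i) = 0 := by
      have := congrArg adjoint h2
      simpa only [adjoint_comp, adjoint_adjoint, map_zero, comp_assoc] using this
    have h4 : ∀ y, X k (adjoint (X i) y) = 0 := comp_eq_zero_of_adjoint_comp
      fun y => by simpa using congrArg (fun A => A y) h3
    have h5 : X k ∘L adjoint (X i) = 0 := ContinuousLinearMap.ext h4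
    have h6 := congrArg adjoint h5
    rw [adjoint_comp, adjoint_adjoint, map_zero] at h6
    exact fun y => congrArg (fun A => A y) h6
  set R : Fin n → K →L[ℂ] K := fun i => V i * p with hR
  have hRa : ∀ i y, R i y = V i (p y) := fun i y => rfl
  have hRs : ∀ i y, adjoint (R i) y = p (adjoint (V i) y) := fun i y => by
    simp only [hR, ← star_eq_adjoint, star_mul, op_mul_apply]
    rw [star_eq_adjoint p, hps]
  have hXR : ∀ i k, i ≠ k → ∀ x, X k (adjoint (T i) x) = adjoint (R i) (X k x) := by
    intro i k hik x
    simp [hXa, hRs, hpa, hVW, hWV, hdc i k hik, hW]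
  obtain ⟨hZ, -⟩ := applyDelta_isStarProjection (R := R) hp
    (fun i => ContinuousLinearMap.ext fun y => by simp [hRa, hpa, hW])
    (fun i => ContinuousLinearMap.ext fun y => by simp [hRa, hpa, hW, hWV])
    (fun i => ContinuousLinearMap.ext fun y => by
      simp [star_eq_adjoint, hRs, hRa, hpa, hiso, hW])
    (fun i k => ContinuousLinearMap.ext fun y => by
      simp [hRa, hpa, hW, hWV, hcomm i k])
    (fun i k hik => ContinuousLinearMap.ext fun y => by
      have h := hXX k i hik.symm y
      simp only [hXa, hXs, hpa, map_sub, hVW, hWV, hW] at h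
      simp only [op_mul_apply, star_eq_adjoint, hRs, hRa, hpa, map_sub, hVW, hWV, hW,
        hdc i k hik]
      rw [← sub_eq_zero]
      rw [← h]
      simp
      abel)
    L hL
  have hmain : applyDelta T L (1 - adjoint (T j) * T j) =
      adjoint (X j) ∘L applyDelta R L p ∘L X j := by
    clear hL hZ
    induction L with
    | nil =>
      refine ContinuousLinearMap.ext fun x => ?_
      have hpX : p (X j x) = X j x := by simp [hXa, hpa, hW]
      simp only [applyDelta, List.foldr_nil, comp_apply, hpX, hD]
    | cons k L ih =>
      have hjk : k ≠ j := fun h => hj (h ▸ List.mem_cons_self)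
      have hXR' : ∀ y, T k (adjoint (X j) y) = adjoint (X j) (R k y) := fun y => by
        refine ext_inner_right ℂ fun x => ?_
        rw [← adjoint_inner_right, adjoint_inner_left, adjoint_inner_left, hXR k j hjk,
          adjoint_inner_right]
      rw [applyDelta_cons, applyDelta_cons, ih fun h => hj (List.mem_cons_of_mem _ h)]
      refine ContinuousLinearMap.ext fun x => ?_
      simp only [sub_apply, op_mul_apply, comp_apply, map_sub, hXR', hXR k j hjk]
  rw [hmain]
  exact (IsPositive.of_isStarProjection hZ).adjoint_conj (X j)

end Dilation

/-! ### The coordinate shifts on `ℓ²(ℕⁿ; H)` -/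

lemma lp_two_memlp_iff {ι : Type*} {f : ι → H} :
    Memℓp f 2 ↔ Summable fun α => ‖f α‖ ^ 2 := by
  rw [memℓp_gen_iff (by simp)]
  simp

lemma lp_two_hasSum {ι : Type*} (f : lp (fun _ : ι => H) 2) :
    HasSum (fun α => ‖f α‖ ^ 2) (‖f‖ ^ 2) := by
  simpa using lp.hasSum_norm (p := 2) (by simp) f

/-- Extension by zero along the translation `α ↦ α + eᵢ` of `ℕⁿ`. -/
noncomputable def shiftFun {n : ℕ} (i : Fin n) (f : (Fin n → ℕ) → H) (α : Fin n → ℕ) : H :=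
  if α i = 0 then 0 else f (α - Pi.single i 1)

lemma shiftFun_add {n : ℕ} (i : Fin n) (f : (Fin n → ℕ) → H) (α : Fin n → ℕ) :
    shiftFun i f (α + Pi.single i 1) = f α := by
  simp [shiftFun]

lemma eq_add_single {n : ℕ} {i : Fin n} {α : Fin n → ℕ} (h : α i ≠ 0) :
    α = (α - Pi.single i 1) + Pi.single i 1 := by
  ext l
  by_cases hl : l = i
  · subst hl
    simp only [Pi.add_apply, Pi.sub_apply, Pi.single_eq_same]
    omega
  · simp [hl]

lemma hasSum_shiftFun {n : ℕ} (i : Fin n) {f : (Fin n → ℕ) → H} {a : ℝ}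
    (hf : HasSum (fun α => ‖f α‖ ^ 2) a) : HasSum (fun α => ‖shiftFun i f α‖ ^ 2) a := by
  rw [← (add_left_injective (Pi.single i 1 : Fin n → ℕ)).hasSum_iff]
  · simpa only [Function.comp_def, shiftFun_add] using hf
  · intro α hα
    by_cases h : α i = 0
    · simp [shiftFun, h]
    · exact absurd ⟨_, (eq_add_single h).symm⟩ hα

/-- The `i`-th coordinate shift on `ℓ²(ℕⁿ; H)`. -/
noncomputable def shift {n : ℕ} (i : Fin n) :
    lp (fun _ : Fin n → ℕ => H) 2 →ₗᵢ[ℂ] lp (fun _ : Fin n → ℕ => H) 2 where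
  toFun f := ⟨shiftFun i f, lp_two_memlp_iff.2 (hasSum_shiftFun i (lp_two_hasSum f)).summable⟩
  map_add' f g := by
    ext α
    change shiftFun i (fun β => f β + g β) α = shiftFun i f α + shiftFun i g α
    by_cases h : α i = 0 <;> simp [shiftFun, h]
  map_smul' c f := by
    ext α
    by_cases h : α i = 0 <;> simp [shiftFun, h]
  norm_map' f := by
    have h1 := lp_two_hasSum (⟨shiftFun i f,
      lp_two_memlp_iff.2 (hasSum_shiftFun i (lp_two_hasSum f)).summable⟩ :
        lp (fun _ : Fin n → ℕ => H) 2)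
    have h2 := h1.unique (hasSum_shiftFun i (lp_two_hasSum f))
    exact (sq_eq_sq₀ (norm_nonneg _) (norm_nonneg _)).1 h2

/-- The `i`-th coordinate shift on `ℓ²(ℕⁿ; H)` as a bounded operator. -/
noncomputable def shiftL {n : ℕ} (i : Fin n) :
    lp (fun _ : Fin n → ℕ => H) 2 →L[ℂ] lp (fun _ : Fin n → ℕ => H) 2 :=
  (shift i).toContinuousLinearMap

lemma shiftL_apply {n : ℕ} (i : Fin n) (f : lp (fun _ : Fin n → ℕ => H) 2) (α : Fin n → ℕ) :
    shiftL i f α = shiftFun i f α := rfl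

lemma adjoint_shiftL_apply {n : ℕ} (i : Fin n) (f : lp (fun _ : Fin n → ℕ => H) 2)
    (α : Fin n → ℕ) : adjoint (shiftL i) f α = f (α + Pi.single i 1) := by
  refine ext_inner_left ℂ fun a => ?_
  have h1 : shiftL i (lp.single 2 α a) = lp.single 2 (α + Pi.single i 1) a := by
    ext β
    rw [shiftL_apply]
    by_cases h : β i = 0
    · have hne : β ≠ α + Pi.single i 1 := fun hβ => by simp [hβ] at h
      rw [lp.single_apply_ne _ _ _ hne]
      simp [shiftFun, h]
    · rw [eq_add_single h, shiftFun_add]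
      simp only [lp.single_apply, Pi.single_apply, add_left_inj]
  refine (lp.inner_single_left (𝕜 := ℂ) α a (adjoint (shiftL i) f)).symm.trans ?_
  rw [adjoint_inner_right, h1]
  exact lp.inner_single_left (𝕜 := ℂ) (α + Pi.single i 1) a f

lemma shiftL_iso {n : ℕ} (i : Fin n) (f : lp (fun _ : Fin n → ℕ => H) 2) :
    adjoint (shiftL i) (shiftL i f) = f := by
  ext α
  rw [adjoint_shiftL_apply, shiftL_apply, shiftFun_add]

lemma shiftL_comm {n : ℕ} (i k : Fin n) (f : lp (fun _ : Fin n → ℕ => H) 2) :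
    shiftL i (shiftL k f) = shiftL k (shiftL i f) := by
  refine ext_inner_right ℂ fun g => ?_
  have h : adjoint (shiftL k) (adjoint (shiftL i) g) = adjoint (shiftL i) (adjoint (shiftL k) g) := by
    ext α
    simp only [adjoint_shiftL_apply, add_right_comm]
  simp only [← adjoint_inner_right, h]

lemma shiftL_doubly_comm {n : ℕ} (i k : Fin n) (hik : i ≠ k)
    (f : lp (fun _ : Fin n → ℕ => H) 2) :
    adjoint (shiftL i) (shiftL k f) = shiftL k (adjoint (shiftL i) f) := by
  ext α
  rw [adjoint_shiftL_apply, shiftL_apply, shiftL_apply]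
  by_cases h : α k = 0
  · simp [shiftFun, h, hik.symm]
  · have h1 : α + Pi.single i 1 - Pi.single k 1 = α - Pi.single k 1 + Pi.single i 1 := by
      conv_lhs => rw [eq_add_single h, add_right_comm]
      simp
    simp [shiftFun, h, hik.symm, adjoint_shiftL_apply, h1]

/-! ### The canonical dilation of a Szegő tuple -/

lemma finPow_cons {n : ℕ} (T : Fin (n + 1) → H →L[ℂ] H) (k : Fin (n + 1) → ℕ) :
    finPow T k = T 0 ^ k 0 * finPow (fun i => T i.succ) (fun i => k i.succ) := by
  simp [finPow, List.finRange_succ, Function.comp_def]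

/-- The Szegő operator is the product of the maps `I - Δ_{T i}` applied to the identity. -/
lemma szegoInv_eq {n : ℕ} (T : Fin n → H →L[ℂ] H) :
    szegoInv T = applyDelta T (List.finRange n) 1 := by
  induction n with
  | zero =>
    have h1 : adjoint (1 : H →L[ℂ] H) = 1 := by rw [← star_eq_adjoint, star_one]
    simp [szegoInv, applyDelta, finPow, h1]
  | succ n ih =>
    have h1 : applyDelta T (List.finRange (n + 1)) 1 =
        szegoInv (fun i => T i.succ) - T 0 * szegoInv (fun i => T i.succ) * adjoint (T 0) := by
      rw [ih, List.finRange_succ, applyDelta_cons]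
      simp [applyDelta, List.foldr_map]
    have h2 : ∀ A : H →L[ℂ] H, adjoint (T 0 * A) = adjoint A * adjoint (T 0) := fun A => by
      simp only [← star_eq_adjoint, star_mul]
    rw [h1, szegoInv, ← (Fin.consEquiv fun _ => Bool).sum_comp, Fintype.sum_prod_type,
      Fintype.sum_bool, add_comm, sub_eq_add_neg]
    congr 1
    · refine Finset.sum_congr rfl fun k _ => ?_
      simp [finPow_cons, Fin.consEquiv, Fin.sum_univ_succ]
    · rw [szegoInv, Finset.mul_sum, Finset.sum_mul, ← Finset.sum_neg_distrib]
      refine Finset.sum_congr rfl fun k _ => ?_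
      simp only [finPow_cons, Fin.consEquiv, Fin.sum_univ_succ, Equiv.coe_fn_mk, Fin.cons_zero,
        Fin.cons_succ, if_true, pow_one, h2, pow_add, neg_one_mul, neg_smul, mul_smul_comm,
        smul_mul_assoc, mul_assoc]

/-- For `C* C = 𝕊ₙ⁻¹(T, T*)`, the vectors `C T*^α h` have square sum `‖h‖²`. -/
lemma hasSum_szego {n : ℕ} {T : Fin n → H →L[ℂ] H} (hT : IsSzegoTuple T) {C : H →L[ℂ] H}
    (hC : szegoInv T = star C * C) (h : H) :
    HasSum (fun α : Fin n → ℕ => ‖C (adjoint (finPow T α) h)‖ ^ 2) (‖h‖ ^ 2) := by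
  have hperm : ((Finset.univ : Finset (Fin n)).sort (· ≤ ·)).Perm (List.finRange n) := by
    rw [List.perm_ext_iff_of_nodup (Finset.sort_nodup _ _) (List.nodup_finRange n)]
    simp
  have hS : applyDelta T ((Finset.univ : Finset (Fin n)).sort (· ≤ ·)) 1 = szegoInv T := by
    rw [applyDelta_perm hT.comm hperm, szegoInv_eq]
  have h1 := hasSum_reApplyInnerSelf_finPow hT.comm hT.pure Finset.univ (A := 1)
    (IsSelfAdjoint.one _) (hS ▸ hT.pos) h
  rw [hS] at h1
  have hq : ∀ x, (szegoInv T).reApplyInnerSelf x = ‖C x‖ ^ 2 := fun x => by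
    rw [reApplyInnerSelf_apply, hC, op_mul_apply, star_eq_adjoint, adjoint_inner_left,
      inner_self_eq_norm_sq]
  have hone : (1 : H →L[ℂ] H).reApplyInnerSelf h = ‖h‖ ^ 2 := by
    rw [reApplyInnerSelf_apply]
    exact inner_self_eq_norm_sq h
  simp only [hq, hone] at h1
  let e : (Fin n → ℕ) ≃ (↥(Finset.univ : Finset (Fin n)) → ℕ) :=
    (Equiv.subtypeUnivEquiv fun i => Finset.mem_univ i).symm.arrowCongr (Equiv.refl ℕ)
  have h2 := e.hasSum_iff.2 h1
  have he : ∀ α, extendSupport Finset.univ (e α) = α := fun α => by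
    ext i
    simp [extendSupport, e]
  simpa only [Function.comp_def, he] using h2

/-- The isometry `h ↦ (C T*^α h)_α` of `H` into `ℓ²(ℕⁿ; H)`, where `C* C = 𝕊ₙ⁻¹(T, T*)`. -/
noncomputable def szegoEmbedding {n : ℕ} {T : Fin n → H →L[ℂ] H} (hT : IsSzegoTuple T)
    {C : H →L[ℂ] H} (hC : szegoInv T = star C * C) :
    H →ₗᵢ[ℂ] lp (fun _ : Fin n → ℕ => H) 2 where
  toFun h := ⟨fun α => C (adjoint (finPow T α) h),
    lp_two_memlp_iff.2 (hasSum_szego hT hC h).summable⟩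
  map_add' x y := by
    ext α
    change C (adjoint (finPow T α) (x + y)) =
      C (adjoint (finPow T α) x) + C (adjoint (finPow T α) y)
    simp only [map_add]
  map_smul' c x := by ext α; simp
  norm_map' h := by
    have h1 := lp_two_hasSum (⟨fun α => C (adjoint (finPow T α) h),
      lp_two_memlp_iff.2 (hasSum_szego hT hC h).summable⟩ : lp (fun _ : Fin n → ℕ => H) 2)
    exact (sq_eq_sq₀ (norm_nonneg _) (norm_nonneg _)).1 (h1.unique (hasSum_szego hT hC h))

lemma adjoint_szegoEmbedding {n : ℕ} {T : Fin n → H →L[ℂ] H} (hT : IsSzegoTuple T)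
    {C : H →L[ℂ] H} (hC : szegoInv T = star C * C) (x : H) :
    adjoint (szegoEmbedding hT hC).toContinuousLinearMap
      ((szegoEmbedding hT hC).toContinuousLinearMap x) = x := by
  refine ext_inner_right ℂ fun y => ?_
  rw [adjoint_inner_left]
  exact (szegoEmbedding hT hC).inner_map_map x y

/-- The embedding intertwines the adjoints of `T` with the backward shifts. -/
lemma adjoint_shiftL_szegoEmbedding {n : ℕ} {T : Fin n → H →L[ℂ] H} (hT : IsSzegoTuple T)
    {C : H →L[ℂ] H} (hC : szegoInv T = star C * C) (i : Fin n) (x : H) :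
    adjoint (shiftL i) ((szegoEmbedding hT hC).toContinuousLinearMap x) =
      (szegoEmbedding hT hC).toContinuousLinearMap (adjoint (T i) x) := by
  ext α
  rw [adjoint_shiftL_apply]
  change C (adjoint (finPow T (α + Pi.single i 1)) x) =
    C (adjoint (finPow T α) (adjoint (T i) x))
  rw [add_comm, finPow_add hT.comm, finPow_single, pow_one]
  simp only [← star_eq_adjoint, star_mul, op_mul_apply]

/-- The isometry `szegoEmbedding` dilates `T` to the coordinate shifts, which are doubly commuting,
so the dilation criterion applies. -/
lemma isPositive_jointDefectSq {n : ℕ} {T : Fin n → H →L[ℂ] H} (hT : IsBeurlingTuple T)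
    (j : Fin n) : (jointDefectSq T j).IsPositive := by
  obtain ⟨hS, horth⟩ := hT
  have h0 : 0 ≤ szegoInv T := (nonneg_iff_isPositive _).2 hS.pos
  obtain ⟨C, hC⟩ := CStarAlgebra.nonneg_iff_eq_star_mul_self.1 h0
  exact isPositive_applyDelta_of_dilation (adjoint_szegoEmbedding hS hC)
    (adjoint_shiftL_szegoEmbedding hS hC) shiftL_iso shiftL_comm shiftL_doubly_comm horth j
    ((Finset.univ.erase j).sort (· ≤ ·)) (Finset.sort_nodup _ _) (by simp)

/-! ### The series for the truncated defect operators -/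

/-- For a Beurling tuple `T`, `j`, `P ⊆ {1,…,n} \ {j}` and
`P′ = {1,…,n} \ (P ∪ {j})`, for every `h ∈ H` the family
`(T_{P′}^α D²_{j,T} T_{P′}^{*α} h)_{α ∈ ℤ₊^{P′}}` is summable with sum `D²_{j,T,P} h`. -/
theorem beurling_truncDefectSq_series {n : ℕ} (hn : 0 < n) (T : Fin n → H →L[ℂ] H)
    (hT : IsBeurlingTuple T) (j : Fin n) (P : Finset (Fin n)) (hP : j ∉ P) (h : H) :
    HasSum
      (fun α : ↥(Finset.univ \ insert j P) → ℕ =>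
        finPow T (extendSupport (Finset.univ \ insert j P) α)
          (jointDefectSq T j
            (adjoint (finPow T (extendSupport (Finset.univ \ insert j P) α)) h)))
      (truncDefectSq T j P h) := by
  obtain ⟨hS, -⟩ := id hT
  set Q := Finset.univ \ insert j P with hQ
  have hperm : ((Finset.univ.erase j).sort (· ≤ ·)).Perm
      (Q.sort (· ≤ ·) ++ P.sort (· ≤ ·)) := by
    rw [List.perm_ext_iff_of_nodup (Finset.sort_nodup _ _)]
    · intro a
      simp only [Finset.mem_sort, Finset.mem_erase, Finset.mem_univ, and_true, List.mem_append, hQ,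
        Finset.mem_sdiff, true_and, Finset.mem_insert, not_or]
      by_cases ha : a ∈ P
      · simpa [ha] using fun h : a = j => hP (h ▸ ha)
      · simp [ha]
    · refine List.nodup_append.2 ⟨Finset.sort_nodup _ _, Finset.sort_nodup _ _, ?_⟩
      rintro a ha b hb rfl
      rw [Finset.mem_sort] at ha hb
      simp [hQ, hb] at ha
  have hJ : jointDefectSq T j = applyDelta T (Q.sort (· ≤ ·)) (truncDefectSq T j P) := by
    rw [jointDefectSq, truncDefectSq, applyDelta_perm hS.comm hperm, applyDelta_append]
    rfl
  have hpos := isPositive_jointDefectSq hT j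
  have hsa : IsSelfAdjoint (truncDefectSq T j P) :=
    isSelfAdjoint_applyDelta T _ ((IsSelfAdjoint.one _).sub (IsSelfAdjoint.star_mul_self (T j)))
  rw [hJ] at hpos ⊢
  refine hasSum_apply_of_hasSum_reApplyInnerSelf
    (F := fun α : ↥Q → ℕ => finPow T (extendSupport Q α) ∘L
      applyDelta T (Q.sort (· ≤ ·)) (truncDefectSq T j P) ∘L
        adjoint (finPow T (extendSupport Q α)))
    (fun α => hpos.conj_adjoint _) (isPositive_of_applyDelta hS.pure hsa _ hpos) (fun x => ?_) h
  convert hasSum_reApplyInnerSelf_finPow hS.comm hS.pure Q hsa hpos x using 2 with α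
  simp only [reApplyInnerSelf_apply, comp_apply]
  rw [← adjoint_inner_right]
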